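/- arXiv:0709.0516 — 11 statements merged into one kernel-verified Lean document; each statement's English description precedes it below -/
import Mathlib

section
/- In the two-subchannel unknown-channel Gaussian interference game, the equal-split point is the unique symmetric Nash equilibrium: (i) p = P/2 is the unique maximizer over [0, P] of the map p ↦ U(p, P/2); and (ii) if q ∈ [0, P] satisfies U(q, q) ≥ U(p, q) for all p ∈ [0, P], then q = P/2. -/
open MeasureTheory

lemma aux_int {Ω : Type*} [MeasurableSpace Ω] (μ : Measure Ω) [IsProbabilityMeasure μ]
    (P N₀ a b : ℝ) (hN₀ : 0 < N₀) (ha : 0 < a)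
    (g h : Ω → ℝ) (hg : Measurable g) (hh : Measurable h)
    (hgb : ∀ ω, a ≤ g ω ∧ g ω ≤ b) (hhb : ∀ ω, a ≤ h ω ∧ h ω ≤ b)
    (p q : ℝ) (hp0 : 0 ≤ p) (hpP : p ≤ P) (hq0 : 0 ≤ q) :
    Integrable (fun ω => Real.log (1 + g ω * p / (N₀ + h ω * q))) μ := by
  apply Integrable.of_bound (C := b * P / N₀)
  · apply Measurable.aestronglyMeasurable
    fun_prop
  · refine Filter.Eventually.of_forall fun ω => ?_
    have h1 := hgb ω
    have h2 := hhb ω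
    have hg0 : 0 < g ω := by linarith
    have hh0 : 0 < h ω := by linarith
    have h3 : 0 ≤ g ω * p / (N₀ + h ω * q) := by positivity
    have h4 : g ω * p / (N₀ + h ω * q) ≤ b * P / N₀ := by
      apply div_le_div₀
      · nlinarith
      · exact mul_le_mul h1.2 hpP hp0 (by linarith)
      · exact hN₀
      · have : 0 ≤ h ω * q := by positivity
        linarith
    rw [Real.norm_eq_abs, abs_of_nonneg (Real.log_nonneg (by linarith))]
    have := Real.log_le_sub_one_of_pos (show 0 < 1 + g ω * p / (N₀ + h ω * q) by linarith)
    linarith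

lemma aux_pt (P N g h p q : ℝ) (hN : 0 < N) (hg : 0 < g) (hh : 0 < h)
    (hp0 : 0 ≤ p) (hpP : p ≤ P) (hq0 : 0 ≤ q) (hqP : q ≤ P) (hP : 0 < P) (hne : p ≠ P / 2)
    (hxy : 0 ≤ (p - P / 2) * (q - P / 2)) :
    (1/2) * Real.log (1 + g * p / (N + h * q)) +
      (1/2) * Real.log (1 + g * (P - p) / (N + h * (P - q))) <
    (1/2) * Real.log (1 + g * (P / 2) / (N + h * q)) +
      (1/2) * Real.log (1 + g * (P - P / 2) / (N + h * (P - q))) := by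
  have hA : 0 < N + h * q := by positivity
  have hPq : 0 ≤ P - q := by linarith
  have hPp : 0 ≤ P - p := by linarith
  have hPP : 0 < P - P / 2 := by linarith
  have hB : 0 < N + h * (P - q) := by positivity
  have key : Real.log ((1 + g * p / (N + h * q)) * (1 + g * (P - p) / (N + h * (P - q)))) <
      Real.log ((1 + g * (P / 2) / (N + h * q)) * (1 + g * (P - P / 2) / (N + h * (P - q)))) := by
    apply Real.log_lt_log (by positivity)
    have e : ∀ x : ℝ, (1 + g * x / (N + h * q)) * (1 + g * (P - x) / (N + h * (P - q))) =
        ((N + h * q + g * x) * (N + h * (P - q) + g * (P - x))) /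
          ((N + h * q) * (N + h * (P - q))) := by
      intro x
      field_simp
    rw [e, e]
    apply div_lt_div_of_pos_right _ (by positivity)
    have h1 : 0 < (g * (p - P / 2)) ^ 2 := by
      have : p - P / 2 ≠ 0 := sub_ne_zero.mpr hne
      positivity
    have h2 : 0 ≤ g * h * ((p - P / 2) * (q - P / 2)) := by positivity
    nlinarith
  rw [Real.log_mul (by positivity) (by positivity),
    Real.log_mul (by positivity) (by positivity)] at key
  linarith

/-- In the two-subchannel unknown-channel Gaussian interference game, the equal-split point
`P/2` is the unique symmetric Nash equilibrium: (i) `p = P/2` is the unique maximizer over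
`[0, P]` of `p ↦ U p (P/2)`; and (ii) any symmetric best response `q` equals `P/2`. -/
theorem stmt_0
    {Ω : Type*} [MeasurableSpace Ω] (μ : Measure Ω) [IsProbabilityMeasure μ]
    (P N₀ a b : ℝ) (hP : 0 < P) (hN₀ : 0 < N₀) (ha : 0 < a) (hab : a ≤ b)
    (g11 g21 : Ω → ℝ) (hg11 : Measurable g11) (hg21 : Measurable g21)
    (hg11b : ∀ ω, a ≤ g11 ω ∧ g11 ω ≤ b) (hg21b : ∀ ω, a ≤ g21 ω ∧ g21 ω ≤ b)
    (U : ℝ → ℝ → ℝ)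
    (hU : ∀ p q, U p q =
      ∫ ω, ((1/2) * Real.log (1 + g11 ω * p / (N₀ + g21 ω * q)) +
            (1/2) * Real.log (1 + g11 ω * (P - p) / (N₀ + g21 ω * (P - q)))) ∂μ) :
    (∀ p ∈ Set.Icc (0:ℝ) P, p ≠ P / 2 → U p (P / 2) < U (P / 2) (P / 2)) ∧
    (∀ q ∈ Set.Icc (0:ℝ) P, (∀ p ∈ Set.Icc (0:ℝ) P, U p q ≤ U q q) → q = P / 2) := by
  have main : ∀ p ∈ Set.Icc (0:ℝ) P, ∀ q ∈ Set.Icc (0:ℝ) P, p ≠ P / 2 →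
      0 ≤ (p - P / 2) * (q - P / 2) → U p q < U (P / 2) q := by
    intro p hp q hq hne hxy
    have hI : ∀ p ∈ Set.Icc (0:ℝ) P, Integrable (fun ω =>
        ((1/2) * Real.log (1 + g11 ω * p / (N₀ + g21 ω * q)) +
            (1/2) * Real.log (1 + g11 ω * (P - p) / (N₀ + g21 ω * (P - q))))) μ := by
      intro p hp
      have hp' := hp.1
      have hp'' := hp.2
      have hq' := hq.2
      exact ((aux_int μ P N₀ a b hN₀ ha g11 g21 hg11 hg21 hg11b hg21b p q hp.1 hp.2
        hq.1).const_mul _).add ((aux_int μ P N₀ a b hN₀ ha g11 g21 hg11 hg21 hg11b hg21b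
          (P - p) (P - q) (by linarith) (by linarith) (by linarith)).const_mul _)
    have hlt := fun ω => aux_pt P N₀ (g11 ω) (g21 ω) p q hN₀ (ha.trans_le (hg11b ω).1)
      (ha.trans_le (hg21b ω).1) hp.1 hp.2 hq.1 hq.2 hP hne hxy
    have i1 := hI p hp
    have i2 := hI (P / 2) ⟨by linarith, by linarith⟩
    rw [hU, hU, ← sub_pos, ← integral_sub i2 i1]
    rw [integral_pos_iff_support_of_nonneg (fun ω => (sub_pos.mpr (hlt ω)).le) (i2.sub i1)]
    have : Function.support (fun ω =>
        ((1/2) * Real.log (1 + g11 ω * (P / 2) / (N₀ + g21 ω * q)) +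
            (1/2) * Real.log (1 + g11 ω * (P - P / 2) / (N₀ + g21 ω * (P - q)))) -
        ((1/2) * Real.log (1 + g11 ω * p / (N₀ + g21 ω * q)) +
            (1/2) * Real.log (1 + g11 ω * (P - p) / (N₀ + g21 ω * (P - q))))) = Set.univ :=
      Set.eq_univ_of_forall fun ω => (sub_pos.mpr (hlt ω)).ne'
    rw [this]
    simp
  have hm : P / 2 ∈ Set.Icc (0:ℝ) P := ⟨by linarith, by linarith⟩
  refine ⟨fun p hp hne => main p hp _ hm hne (by simp), fun q hq hbest => ?_⟩
  by_contra hne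
  exact absurd (hbest _ hm) (not_le.mpr (main q hq q hq hne (mul_self_nonneg _)))
end

section
/- In the K-subchannel unknown-channel Gaussian interference game, the uniform power allocation is the unique symmetric Nash equilibrium: if q ∈ S_P satisfies U_K(q, q) ≥ U_K(p, q) for all p ∈ S_P, then q_k = P/K for every k = 1, …, K; moreover the uniform vector itself satisfies this condition. -/
open MeasureTheory

lemma aux_swap (N g h x y : ℝ) (hN : 0 < N) (hg : 0 < g) (hh : 0 < h) (hy : 0 ≤ y) (hxy : y < x) :
    Real.log (1 + g * x / (N + h * x)) + Real.log (1 + g * y / (N + h * y)) <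
    Real.log (1 + g * y / (N + h * x)) + Real.log (1 + g * x / (N + h * y)) := by
  have hx : 0 ≤ x := hy.trans hxy.le
  rw [← Real.log_mul (by positivity) (by positivity), ← Real.log_mul (by positivity) (by positivity)]
  apply Real.log_lt_log (by positivity)
  have h1 : 0 < N + h * x := by positivity
  have h2 : 0 < N + h * y := by positivity
  have key : (1 + g * y / (N + h * x)) * (1 + g * x / (N + h * y)) -
      (1 + g * x / (N + h * x)) * (1 + g * y / (N + h * y)) =
      g * h * (x - y) ^ 2 / ((N + h * x) * (N + h * y)) := by
    field_simp
    ring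
  have : 0 < x - y := by linarith
  have : 0 < g * h * (x - y) ^ 2 / ((N + h * x) * (N + h * y)) := by positivity
  linarith

lemma aux_tangent (c x u : ℝ) (hc : 0 < c) (hx : 0 ≤ x) (hu : 0 ≤ u) :
    Real.log (1 + c * x) ≤ Real.log (1 + c * u) + c / (1 + c * u) * (x - u) := by
  have h := Real.log_le_sub_one_of_pos (x := (1 + c * x) / (1 + c * u)) (by positivity)
  rw [Real.log_div (by positivity) (by positivity)] at h
  have : (1 + c * x) / (1 + c * u) - 1 = c / (1 + c * u) * (x - u) := by
    field_simp
    ring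
  linarith

/-- In the K-subchannel unknown-channel Gaussian interference game, the uniform power
allocation is the unique symmetric Nash equilibrium: any symmetric equilibrium allocation
`q` puts power `P/K` in every subchannel, and the uniform allocation is indeed a symmetric
equilibrium. -/
theorem stmt_2
    {Ω : Type*} [MeasurableSpace Ω] (μ : Measure Ω) [IsProbabilityMeasure μ]
    (P N₀ a b : ℝ) (K : ℕ) (hK : 2 ≤ K)
    (hP : 0 < P) (hN₀ : 0 < N₀) (ha : 0 < a) (hab : a ≤ b)
    (g11 g21 : Ω → ℝ) (hg11 : Measurable g11) (hg21 : Measurable g21)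
    (hg11b : ∀ ω, a ≤ g11 ω ∧ g11 ω ≤ b) (hg21b : ∀ ω, a ≤ g21 ω ∧ g21 ω ≤ b)
    (S : Set (Fin K → ℝ)) (hS : S = {p | (∀ k, 0 ≤ p k) ∧ ∑ k, p k = P})
    (U : (Fin K → ℝ) → (Fin K → ℝ) → ℝ)
    (hU : ∀ p q, U p q =
      ∫ ω, (∑ k, (1/2) * Real.log (1 + g11 ω * p k / (N₀ + g21 ω * q k))) ∂μ) :
    (∀ q ∈ S, (∀ p ∈ S, U p q ≤ U q q) → ∀ k, q k = P / K) ∧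
    ((fun _ : Fin K => P / K) ∈ S ∧
      ∀ p ∈ S, U p (fun _ => P / K) ≤ U (fun _ => P / K) (fun _ => P / K)) := by
  have hpos1 : ∀ ω, 0 < g11 ω := fun ω => ha.trans_le (hg11b ω).1
  have hpos2 : ∀ ω, 0 < g21 ω := fun ω => ha.trans_le (hg21b ω).1
  have hKpos : (0 : ℝ) < K := by
    have : 0 < K := by omega
    exact_mod_cast this
  have hint : ∀ p q : Fin K → ℝ, (∀ k, 0 ≤ p k) → (∀ k, 0 ≤ q k) →
      Integrable (fun ω => ∑ k, (1/2) * Real.log (1 + g11 ω * p k / (N₀ + g21 ω * q k))) μ := by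
    intro p q hp hq
    refine integrable_finsetSum _ fun k _ => ?_
    refine Integrable.const_mul ?_ _
    refine Integrable.of_bound (C := b * p k / N₀) ?_ ?_
    · exact Measurable.aestronglyMeasurable (by fun_prop)
    · refine Filter.Eventually.of_forall fun ω => ?_
      have h1 := hpos1 ω
      have h2 := hpos2 ω
      have hpk := hp k
      have hqk := hq k
      have h3 : 0 ≤ g11 ω * p k / (N₀ + g21 ω * q k) := by positivity
      rw [Real.norm_of_nonneg (Real.log_nonneg (by linarith))]
      have h4 := Real.log_le_sub_one_of_pos (x := 1 + g11 ω * p k / (N₀ + g21 ω * q k)) (by positivity)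
      have h5 : g11 ω * p k / (N₀ + g21 ω * q k) ≤ b * p k / N₀ := by
        have h6 : N₀ ≤ N₀ + g21 ω * q k := by
          have : 0 ≤ g21 ω * q k := by positivity
          linarith
        have h7 := (hg11b ω).2
        have hb : 0 ≤ b := by linarith
        gcongr
      linarith
  have huS : (fun _ : Fin K => P / K) ∈ S := by
    rw [hS]
    refine ⟨fun _ => by positivity, ?_⟩
    simp
    field_simp
  refine ⟨?_, huS, ?_⟩
  · intro q hq hmax
    rw [hS] at hq
    obtain ⟨hq0, hqs⟩ := hq
    have hle : ∀ i j, q i ≤ q j := by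
      intro i j
      by_contra! hlt
      have hij : i ≠ j := by
        rintro rfl
        exact lt_irrefl _ hlt
      have hp0 : ∀ k, 0 ≤ (q ∘ Equiv.swap i j) k := fun k => hq0 _
      have hpS : q ∘ Equiv.swap i j ∈ S := by
        rw [hS]
        refine ⟨hp0, ?_⟩
        rw [← hqs]
        exact Equiv.sum_comp (Equiv.swap i j) q
      have hm := hmax _ hpS
      rw [hU, hU] at hm
      refine absurd hm (not_le.mpr ?_)
      rw [← sub_pos, ← integral_sub (hint _ _ hp0 hq0) (hint _ _ hq0 hq0)]
      have hpt : ∀ ω, 0 < (∑ k, (1/2) * Real.log (1 + g11 ω * (q ∘ Equiv.swap i j) k / (N₀ + g21 ω * q k)))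
          - ∑ k, (1/2) * Real.log (1 + g11 ω * q k / (N₀ + g21 ω * q k)) := by
        intro ω
        rw [← Finset.sum_sub_distrib, Fintype.sum_eq_add i j hij]
        · have := aux_swap N₀ (g11 ω) (g21 ω) (q i) (q j) hN₀ (hpos1 ω) (hpos2 ω) (hq0 j) hlt
          simp only [Function.comp, Equiv.swap_apply_left, Equiv.swap_apply_right]
          linarith
        · rintro k ⟨hki, hkj⟩
          simp [Equiv.swap_apply_of_ne_of_ne hki hkj]
      rw [integral_pos_iff_support_of_nonneg (fun ω => (hpt ω).le)
        ((hint _ _ hp0 hq0).sub (hint _ _ hq0 hq0))]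
      rw [show Function.support _ = Set.univ from Set.eq_univ_of_forall fun ω => (hpt ω).ne']
      simp
    intro k
    have hc : ∀ j, q j = q k := fun j => le_antisymm (hle _ _) (hle _ _)
    rw [Finset.sum_congr rfl (fun j _ => hc j)] at hqs
    simp at hqs
    rw [← hqs]
    field_simp
  · intro p hp
    rw [hS] at hp
    obtain ⟨hp0, hps⟩ := hp
    rw [hU, hU]
    have hu0 : 0 ≤ P / K := by positivity
    refine integral_mono (hint _ _ hp0 fun _ => hu0) (hint _ _ (fun _ => hu0) fun _ => hu0) ?_
    intro ω
    have h1 := hpos1 ω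
    have h2 := hpos2 ω
    have hc : 0 < g11 ω / (N₀ + g21 ω * (P / K)) := by positivity
    set c := g11 ω / (N₀ + g21 ω * (P / K)) with hcdef
    have e : ∀ x, g11 ω * x / (N₀ + g21 ω * (P / K)) = c * x := fun x => by
      rw [hcdef]; ring
    simp only [e]
    calc ∑ k, (1/2) * Real.log (1 + c * p k)
        ≤ ∑ k, ((1/2) * Real.log (1 + c * (P / K)) + (1/2) * (c / (1 + c * (P / K))) * (p k - P / K)) := by
          refine Finset.sum_le_sum fun k _ => ?_
          have := aux_tangent c (p k) (P / K) hc (hp0 k) hu0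
          linarith
      _ = ∑ k : Fin K, (1/2) * Real.log (1 + c * (P / K)) := by
          rw [Finset.sum_add_distrib, ← Finset.mul_sum, ← Finset.mul_sum, Finset.sum_sub_distrib, hps]
          have : ∑ _k : Fin K, P / (K : ℝ) = P := by
            simp
            field_simp
          rw [this]
          simp
end

section
/- For all real g > 0, g' > 0, P > 0, N₀ > 0, every integer K ≥ 2, every γ ∈ [0, 1], and α = (1 − γ)/K, the expected payoff from spreading strictly exceeds the expected payoff from concentrating: (1 − γ)·[ ((K − 1)/2)·log(1 + (g·P/K)/N₀) + (1/2)·log(1 + (g·P/K)/(N₀ + g'·P)) ] + γ·(K/2)·log(1 + (g·P/K)/(N₀ + g'·P/K)) > α·[ ((K − 1)/2)·log(1 + g·P/N₀) + (1/2)·log(1 + g·P/(N₀ + g'·P)) ] + γ·(1/2)·log(1 + g·P/(N₀ + g'·P/K)). -/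
theorem log_key (K : ℝ) (hK : 1 < K) (x d : ℝ) (hx : 0 < x) (hd : 0 < d) :
    Real.log (1 + x / d) < K * Real.log (1 + (x / K) / d) := by
  have hK0 : 0 < K := by linarith
  have hs : 0 < (x / K) / d := by positivity
  have h := one_add_mul_self_lt_rpow_one_add (s := (x / K) / d) (by linarith) hs.ne' hK
  have e : K * ((x / K) / d) = x / d := by field_simp
  rw [e] at h
  rw [← Real.log_rpow (by linarith)]
  exact Real.log_lt_log (by positivity) h

/-- With `α = (1 − γ)/K`, the expected payoff from spreading power equally over all `K`
subchannels strictly exceeds the expected payoff from concentrating full power in a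
single subchannel (key step of Theorem 2). -/
theorem stmt_4 (g g' P N₀ : ℝ) (hg : 0 < g) (hg' : 0 < g') (hP : 0 < P) (hN₀ : 0 < N₀)
    (K : ℕ) (hK : 2 ≤ K) (γ α : ℝ) (hγ : γ ∈ Set.Icc (0:ℝ) 1) (hα : α = (1 - γ) / K) :
    α * (((K : ℝ) - 1) / 2 * Real.log (1 + g * P / N₀)
          + 1 / 2 * Real.log (1 + g * P / (N₀ + g' * P)))
      + γ * (1 / 2 * Real.log (1 + g * P / (N₀ + g' * P / K)))
    < (1 - γ) * (((K : ℝ) - 1) / 2 * Real.log (1 + (g * P / K) / N₀)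
          + 1 / 2 * Real.log (1 + (g * P / K) / (N₀ + g' * P)))
      + γ * ((K : ℝ) / 2 * Real.log (1 + (g * P / K) / (N₀ + g' * P / K))) := by
  obtain ⟨h0, h1⟩ := hγ
  have hK1 : (1:ℝ) < K := by exact_mod_cast hK
  have hK0 : (0:ℝ) < K := by linarith
  have hx : 0 < g * P := by positivity
  have a1 := log_key K hK1 (g * P) N₀ hx hN₀
  have a2 := log_key K hK1 (g * P) (N₀ + g' * P) hx (by positivity)
  have a3 := log_key K hK1 (g * P) (N₀ + g' * P / K) hx (by positivity)
  generalize Real.log (1 + g * P / N₀) = A1 at *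
  generalize Real.log (1 + g * P / (N₀ + g' * P)) = A2 at *
  generalize Real.log (1 + g * P / (N₀ + g' * P / K)) = A3 at *
  generalize Real.log (1 + (g * P / K) / N₀) = B1 at *
  generalize Real.log (1 + (g * P / K) / (N₀ + g' * P)) = B2 at *
  generalize Real.log (1 + (g * P / K) / (N₀ + g' * P / K)) = B3 at *
  have c1 : A1 / K < B1 := by rw [div_lt_iff₀ hK0]; linarith
  have c2 : A2 / K < B2 := by rw [div_lt_iff₀ hK0]; linarith
  have X : 0 < ((K:ℝ) - 1) / 2 * (B1 - A1 / K) + 1 / 2 * (B2 - A2 / K) := by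
    have := mul_pos (show 0 < ((K:ℝ) - 1) / 2 by linarith) (sub_pos.2 c1)
    linarith
  have Y : 0 < (K * B3 - A3) / 2 := by linarith
  have Z : 0 < (1 - γ) * (((K:ℝ) - 1) / 2 * (B1 - A1 / K) + 1 / 2 * (B2 - A2 / K))
      + γ * ((K * B3 - A3) / 2) := by
    rcases h0.eq_or_lt with h | h
    · rw [← h]; linarith
    · have := mul_nonneg (sub_nonneg.2 h1) X.le
      have := mul_pos h Y
      linarith
  rw [hα, ← sub_pos]
  convert Z using 1
  ring
end

section
/- For all real g ≥ 0, P > 0, N₀ > 0: (1/2)·log(1 + P/(2·N₀)) + (1/2)·log(1 + (P/2)/(N₀ + g·P)) > (1/2)·log(1 + P/N₀) if and only if g < 1/2. (Hence, when the primary concentrates its power in one subchannel, the secondary prefers to spread if g < 1/2 and to occupy the free subchannel if g > 1/2.) -/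
/-- When the primary concentrates its power in one subchannel, the secondary prefers to
spread if and only if `g < 1/2`. -/
theorem stmt_6 (g P N₀ : ℝ) (hg : 0 ≤ g) (hP : 0 < P) (hN₀ : 0 < N₀) :
    (1/2) * Real.log (1 + P / (2 * N₀)) + (1/2) * Real.log (1 + (P / 2) / (N₀ + g * P))
      > (1/2) * Real.log (1 + P / N₀) ↔ g < 1/2 := by
  have hD : 0 < N₀ + g * P := by positivity
  have hA : 0 < 1 + P / (2 * N₀) := by positivity
  have hB : 0 < 1 + (P / 2) / (N₀ + g * P) := by positivity
  have hC : 0 < 1 + P / N₀ := by positivity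
  have key : (1 + P / (2 * N₀)) * (1 + (P / 2) / (N₀ + g * P)) - (1 + P / N₀)
      = P ^ 2 / (2 * N₀ * (N₀ + g * P)) * (1 / 2 - g) := by
    field_simp
    ring
  have hK : 0 < P ^ 2 / (2 * N₀ * (N₀ + g * P)) := by positivity
  rw [← mul_add, gt_iff_lt, mul_lt_mul_iff_right₀ (by norm_num : (0:ℝ) < 1 / 2),
    ← Real.log_mul hA.ne' hB.ne', Real.log_lt_log_iff hC (mul_pos hA hB),
    ← sub_pos, key, mul_pos_iff_of_pos_left hK, sub_pos]
end

section
/- For all real g ≥ 0, P > 0, N₀ > 0: log(1 + (P/2)/(N₀ + g·P/2)) > (1/2)·log(1 + P/N₀) if and only if g < g*, where g* = 1/(√(1 + P/N₀) − 1) − 2·N₀/P. -/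
/-- A user prefers that both users spread (rather than that both share disjoint
subchannels) if and only if its incident gain is below the threshold
`g* = 1/(√(1 + P/N₀) − 1) − 2N₀/P`. -/
theorem stmt_7 (g P N₀ : ℝ) (hg : 0 ≤ g) (hP : 0 < P) (hN₀ : 0 < N₀) :
    Real.log (1 + (P / 2) / (N₀ + g * P / 2)) > (1/2) * Real.log (1 + P / N₀) ↔
      g < 1 / (Real.sqrt (1 + P / N₀) - 1) - 2 * N₀ / P := by
  have hs : 1 < Real.sqrt (1 + P / N₀) := by
    rw [Real.lt_sqrt (by norm_num)]
    have : 0 < P / N₀ := by positivity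
    linarith
  have hpos : (0:ℝ) < 1 + P / N₀ := by positivity
  have hlog : (1/2) * Real.log (1 + P / N₀) = Real.log (Real.sqrt (1 + P / N₀)) := by
    rw [Real.log_sqrt hpos.le]; ring
  have hx : (P / 2) / (N₀ + g * P / 2) = 1 / (g + 2 * N₀ / P) := by
    have h1 : N₀ + g * P / 2 ≠ 0 := by positivity
    have h2 : g + 2 * N₀ / P ≠ 0 := by positivity
    rw [div_eq_div_iff h1 h2]
    field_simp
    ring
  have hk : 0 < g + 2 * N₀ / P := by positivity
  rw [hlog, hx, gt_iff_lt, Real.log_lt_log_iff (by linarith) (by positivity),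
    ← sub_lt_iff_lt_add', lt_one_div (by linarith) hk, lt_sub_iff_add_lt]
end

section
/- For all real P > 0, N₀ > 0 and g ≥ 1/2: (1/2)·log(1 + P/N₀) > log(1 + (P/2)/(N₀ + g·P/2)). (That is, whenever the secondary's incident interference gain g₁₂ exceeds 1/2, its payoff from sharing disjoint subchannels, Π₂^share, strictly exceeds its payoff when both users spread, Π₂^spread.) -/
/-- Whenever the secondary's incident interference gain `g` is at least `1/2`, its payoff
from sharing disjoint subchannels strictly exceeds its payoff when both users spread. -/
theorem stmt_10 (P N₀ g : ℝ) (hP : 0 < P) (hN₀ : 0 < N₀) (hg : 1/2 ≤ g) :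
    (1/2) * Real.log (1 + P / N₀) > Real.log (1 + (P / 2) / (N₀ + g * P / 2)) := by
  have hgP : P / 2 ≤ g * P := by nlinarith
  have h1 : (P / 2) / (N₀ + g * P / 2) ≤ (P / 2) / (N₀ + P / 4) := by
    apply div_le_div_of_nonneg_left <;> linarith
  have h0 : 0 < (P / 2) / (N₀ + g * P / 2) := by
    apply div_pos <;> linarith
  have h2 : (1 + (P / 2) / (N₀ + P / 4)) ^ 2 < 1 + P / N₀ := by
    have e : 1 + P / N₀ - (1 + (P / 2) / (N₀ + P / 4)) ^ 2
        = P ^ 3 / (N₀ * (4 * N₀ + P) ^ 2) := by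
      have : N₀ + P / 4 = (4 * N₀ + P) / 4 := by ring
      rw [this]
      have : 4 * N₀ + P ≠ 0 := by positivity
      field_simp
      ring
    have : 0 < P ^ 3 / (N₀ * (4 * N₀ + P) ^ 2) := by positivity
    linarith
  have h3 : (1 + (P / 2) / (N₀ + g * P / 2)) ^ 2 < 1 + P / N₀ :=
    lt_of_le_of_lt (pow_le_pow_left₀ (by linarith) (by linarith) 2) h2
  have h4 := Real.log_lt_log (by positivity) h3
  rw [Real.log_pow] at h4
  push_cast at h4
  linarith
end

section
/- For all real P > 0, N₀ > 0 and g > 0: log(1 + (P/2)/(N₀ + g·P/2)) + log(1 + P/(2·N₀)) > log(1 + P/N₀) if and only if g < 1. (That is, the primary's two-period payoff from spreading and thereby deterring entry, Π₁^spread + Π₀, strictly exceeds its payoff 2·Π₁^share from sharing in both periods, exactly when its incident interference gain is below 1.) -/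
/-- The primary's two-period payoff from spreading and deterring entry,
`Π₁^spread + Π₀`, strictly exceeds `2·Π₁^share` exactly when `g < 1`. -/
theorem stmt_14 (P N₀ g : ℝ) (hP : 0 < P) (hN₀ : 0 < N₀) (hg : 0 < g) :
    Real.log (1 + (P / 2) / (N₀ + g * P / 2)) + Real.log (1 + P / (2 * N₀))
      > Real.log (1 + P / N₀) ↔ g < 1 := by
  have hD : 0 < N₀ + g * P / 2 := by positivity
  have h1 : 0 < 1 + (P / 2) / (N₀ + g * P / 2) := by positivity
  have h2 : 0 < 1 + P / (2 * N₀) := by positivity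
  have h3 : 0 < 1 + P / N₀ := by positivity
  rw [← Real.log_mul h1.ne' h2.ne', gt_iff_lt, Real.log_lt_log_iff h3 (mul_pos h1 h2)]
  have key : (1 + (P / 2) / (N₀ + g * P / 2)) * (1 + P / (2 * N₀)) - (1 + P / N₀)
      = (P ^ 2 / 4 / (N₀ * (N₀ + g * P / 2))) * (1 - g) := by
    have e : (P / 2) / (N₀ + g * P / 2) = P / 2 * (N₀ + g * P / 2)⁻¹ := div_eq_mul_inv _ _
    generalize hd : N₀ + g * P / 2 = D at *
    have hgP : g * P = 2 * (D - N₀) := by linarith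
    have hgg : g = 2 * (D - N₀) / P := by rw [← hgP]; field_simp
    rw [hgg]
    field_simp
    ring
  have hc : 0 < P ^ 2 / 4 / (N₀ * (N₀ + g * P / 2)) := by positivity
  rw [← sub_pos, key, mul_pos_iff_of_pos_left hc, sub_pos]
end

section
/- For all real P > 0, N₀ > 0 and κ ∈ [0, 1], the function Δ(g) = log(1 + (P/2)/(N₀ + g·P/2)) − [ ((1 − κ)/2)·log(1 + P/N₀) + (κ/2)·log(1 + P/(N₀ + g·P/2)) ] is strictly decreasing in g on [0, ∞). -/
/-- In the sequential game with two-sided uncertainty, the difference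
`Δ(g) = Π₁^spread(g) − Π̄₁^share(g)` is strictly decreasing in `g` on `[0, ∞)`. -/
theorem stmt_15 (P N₀ κ : ℝ) (hP : 0 < P) (hN₀ : 0 < N₀) (hκ : κ ∈ Set.Icc (0:ℝ) 1)
    (Δ : ℝ → ℝ)
    (hΔ : ∀ g, Δ g = Real.log (1 + (P / 2) / (N₀ + g * P / 2)) -
      ((1 - κ) / 2 * Real.log (1 + P / N₀) +
        κ / 2 * Real.log (1 + P / (N₀ + g * P / 2)))) :
    StrictAntiOn Δ (Set.Ici 0) := by
  intro a ha b hb hab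
  obtain ⟨h0, h1⟩ := hκ
  simp only [Set.mem_Ici] at ha hb
  rw [hΔ, hΔ]
  have hx : 0 < N₀ + a * P / 2 := by positivity
  have hxy : N₀ + a * P / 2 < N₀ + b * P / 2 := by
    have := mul_lt_mul_of_pos_right hab hP
    linarith
  generalize N₀ + a * P / 2 = x at *
  generalize N₀ + b * P / 2 = y at *
  have hy : 0 < y := hx.trans hxy
  have ex : P / x = 2 * (P / 2 / x) := by ring
  have ey : P / y = 2 * (P / 2 / y) := by ring
  have huv : P / 2 / y < P / 2 / x := div_lt_div_of_pos_left (by positivity) hx hxy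
  have hv : 0 < P / 2 / y := by positivity
  rw [ex, ey]
  generalize P / 2 / x = u at *
  generalize P / 2 / y = v at *
  have hu : 0 < u := hv.trans huv
  have hB : Real.log (1 + 2 * v) < Real.log (1 + 2 * u) :=
    Real.log_lt_log (by positivity) (by linarith)
  have hA : Real.log ((1 + v) ^ 2 * (1 + 2 * u)) < Real.log ((1 + u) ^ 2 * (1 + 2 * v)) := by
    apply Real.log_lt_log (by positivity)
    have h3 : 0 < (u - v) * (u + v + 2 * u * v) := mul_pos (by linarith) (by positivity)
    nlinarith
  rw [Real.log_mul (by positivity) (by positivity), Real.log_mul (by positivity) (by positivity),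
    Real.log_pow, Real.log_pow] at hA
  push_cast at hA
  have := mul_nonneg (sub_nonneg.2 h1) (sub_nonneg.2 hB.le)
  nlinarith
end

section
/- For all real P > 0 and N₀ > 0: if κ ∈ [0, 1), there exists a unique ĝ ∈ (0, ∞) with Δ(ĝ) = 0, and moreover Δ(g) > 0 for all 0 ≤ g < ĝ and Δ(g) < 0 for all g > ĝ (so the primary spreads if its incident gain is below ĝ and shares if it is above ĝ); if κ = 1, then Δ(g) > 0 for all g ≥ 0 (so the primary always spreads). -/
theorem aux_id (P u : ℝ) (hP : 0 < P) (hu : 0 < u) :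
    Real.log (1 + (P / 2) / u) - 1 / 2 * Real.log (1 + P / u)
      = 1 / 2 * Real.log (1 + (P / 2) ^ 2 / (u * (u + P))) := by
  have h1 : 1 + (P / 2) ^ 2 / (u * (u + P)) = (1 + (P / 2) / u) ^ 2 / (1 + P / u) := by
    have : u + P ≠ 0 := by positivity
    field_simp
    ring
  have h2 : (1 + (P / 2) / u) ^ 2 ≠ 0 := by positivity
  have h3 : 1 + P / u ≠ 0 := by positivity
  rw [h1, Real.log_div h2 h3, Real.log_pow]
  push_cast
  ring

/-- For `κ ∈ [0, 1)` there is a unique threshold `g₀ ∈ (0, ∞)` where `Δ` vanishes; `Δ` is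
positive below it and negative above it (the primary spreads below `g₀` and shares above).
For `κ = 1`, `Δ` is positive everywhere (the primary always spreads). -/
theorem stmt_16 (P N₀ κ : ℝ) (hP : 0 < P) (hN₀ : 0 < N₀) (hκ : κ ∈ Set.Icc (0:ℝ) 1)
    (Δ : ℝ → ℝ)
    (hΔ : ∀ g, Δ g = Real.log (1 + (P / 2) / (N₀ + g * P / 2)) -
      ((1 - κ) / 2 * Real.log (1 + P / N₀) +
        κ / 2 * Real.log (1 + P / (N₀ + g * P / 2)))) :
    (κ < 1 → ∃ g₀ : ℝ, 0 < g₀ ∧ Δ g₀ = 0 ∧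
      (∀ g, 0 ≤ g → g < g₀ → 0 < Δ g) ∧ (∀ g, g₀ < g → Δ g < 0) ∧
      (∀ g', 0 < g' → Δ g' = 0 → g' = g₀)) ∧
    (κ = 1 → ∀ g, 0 ≤ g → 0 < Δ g) := by
  obtain ⟨hκ0, hκ1⟩ := hκ
  have hpos : ∀ g : ℝ, 0 ≤ g → 0 < N₀ + g * P / 2 := fun g hg => by positivity
  have hC : ∀ u : ℝ, 0 < u → 0 < 1 / 2 * Real.log (1 + (P / 2) ^ 2 / (u * (u + P))) := by
    intro u hu
    have : 0 < (P / 2) ^ 2 / (u * (u + P)) := by positivity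
    have := Real.log_pos (by linarith : 1 < 1 + (P / 2) ^ 2 / (u * (u + P)))
    linarith
  refine ⟨fun hlt => ?_, ?_⟩
  · have hanti : ∀ g g' : ℝ, 0 ≤ g → g < g' → Δ g' < Δ g := by
      intro g g' hg hgg
      have hu := hpos g hg
      have huv : N₀ + g * P / 2 < N₀ + g' * P / 2 := by
        have := mul_lt_mul_of_pos_right hgg hP
        linarith
      rw [hΔ, hΔ]
      generalize N₀ + g * P / 2 = u at *
      generalize N₀ + g' * P / 2 = v at *
      have hv : 0 < v := hu.trans huv
      have i1 := aux_id P u hP hu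
      have i2 := aux_id P v hP hv
      have l1 : Real.log (1 + (P / 2) / v) < Real.log (1 + (P / 2) / u) := by
        apply Real.log_lt_log (by positivity)
        gcongr
      have l2 : Real.log (1 + (P / 2) ^ 2 / (v * (v + P)))
          ≤ Real.log (1 + (P / 2) ^ 2 / (u * (u + P))) := by
        apply Real.log_le_log (by positivity)
        gcongr
      have m1 := mul_lt_mul_of_pos_left l1 (sub_pos.2 hlt)
      have m2 : κ * (Real.log (1 + (P / 2) / v) - 1 / 2 * Real.log (1 + P / v))
          ≤ κ * (Real.log (1 + (P / 2) / u) - 1 / 2 * Real.log (1 + P / u)) := by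
        apply mul_le_mul_of_nonneg_left _ hκ0
        rw [i1, i2]
        linarith
      linarith
    have h0 : 0 < Δ 0 := by
      rw [hΔ]
      have := hC N₀ hN₀
      rw [← aux_id P N₀ hP hN₀] at this
      simp only [zero_mul, zero_div, add_zero]
      linarith
    have hu : Filter.Tendsto (fun g : ℝ => N₀ + g * P / 2) Filter.atTop Filter.atTop := by
      apply Filter.tendsto_atTop_add_const_left
      exact (Filter.tendsto_id.atTop_mul_const hP).atTop_div_const two_pos
    have hlog : ∀ k : ℝ, Filter.Tendsto (fun g : ℝ => Real.log (1 + k / (N₀ + g * P / 2)))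
        Filter.atTop (nhds 0) := by
      intro k
      have h := (hu.const_div_atTop k).const_add 1
      rw [add_zero] at h
      have := h.log one_ne_zero
      rwa [Real.log_one] at this
    have hc : 0 < (1 - κ) / 2 * Real.log (1 + P / N₀) := by
      have : 0 < P / N₀ := by positivity
      exact mul_pos (by linarith) (Real.log_pos (by linarith))
    have hlim : Filter.Tendsto Δ Filter.atTop
        (nhds (0 - ((1 - κ) / 2 * Real.log (1 + P / N₀) + κ / 2 * 0))) := by
      rw [funext hΔ]
      exact (hlog (P / 2)).sub (((hlog P).const_mul _).const_add _)
    have hev := hlim.eventually (gt_mem_nhds (show _ < (0 : ℝ) by linarith))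
    obtain ⟨M, hM, hM0⟩ := (hev.and (Filter.eventually_ge_atTop (0 : ℝ))).exists
    have hcont : ContinuousOn Δ (Set.Icc 0 M) := by
      rw [funext hΔ]
      have hl : ∀ k : ℝ, 0 < k → ContinuousOn
          (fun g : ℝ => Real.log (1 + k / (N₀ + g * P / 2))) (Set.Icc 0 M) := by
        intro k hk
        apply ContinuousOn.log
        · apply continuousOn_const.add
          apply continuousOn_const.div (by fun_prop)
          intro x hx
          exact (hpos x hx.1).ne'
        · intro x hx
          have := hpos x hx.1
          positivity
      exact (hl _ (by positivity)).sub
        (continuousOn_const.add (continuousOn_const.mul (hl _ hP)))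
    obtain ⟨g₀, hg, hg0⟩ := intermediate_value_Icc' hM0 hcont ⟨hM.le, h0.le⟩
    have hgpos : 0 < g₀ := by
      rcases hg.1.eq_or_lt with h | h
      · rw [← h] at hg0
        linarith
      · exact h
    refine ⟨g₀, hgpos, hg0, fun g h1 h2 => hg0 ▸ hanti g g₀ h1 h2,
      fun g h => hg0 ▸ hanti g₀ g hgpos.le h, fun g' h1 h2 => ?_⟩
    rcases lt_trichotomy g' g₀ with h | h | h
    · have := hanti _ _ h1.le h
      linarith
    · exact h
    · have := hanti _ _ hgpos.le h
      linarith
  · rintro rfl g hg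
    have hu := hpos g hg
    have := hC _ hu
    rw [← aux_id P _ hP hu] at this
    rw [hΔ]
    linarith
end

section
/- For all real P > 0 and N₀ > 0: Π₀ > Π₁^share, and for every g > 0 the mixing probability λ(g) = 2 − (Π₀ − Π₁^spread(g))/(Π₀ − Π₁^share) satisfies 0 < λ(g) < 1 if and only if g* < g < 1, where g* = 1/(√(1 + P/N₀) − 1) − 2·N₀/P. -/
/-- `Π₀ > Π₁^share`, and the mixing probability
`λ(g) = 2 − (Π₀ − Π₁^spread(g))/(Π₀ − Π₁^share)` is a genuine probability
(`0 < λ(g) < 1`) if and only if `g* < g < 1`. -/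
theorem stmt_17 (P N₀ : ℝ) (hP : 0 < P) (hN₀ : 0 < N₀)
    (Pi0 PiShare gstar : ℝ) (PiSpread lam : ℝ → ℝ)
    (hPi0 : Pi0 = Real.log (1 + P / (2 * N₀)))
    (hPiShare : PiShare = (1/2) * Real.log (1 + P / N₀))
    (hPiSpread : ∀ g, PiSpread g = Real.log (1 + (P / 2) / (N₀ + g * P / 2)))
    (hgstar : gstar = 1 / (Real.sqrt (1 + P / N₀) - 1) - 2 * N₀ / P)
    (hlam : ∀ g, lam g = 2 - (Pi0 - PiSpread g) / (Pi0 - PiShare)) :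
    Pi0 > PiShare ∧
    ∀ g : ℝ, 0 < g → ((0 < lam g ∧ lam g < 1) ↔ (gstar < g ∧ g < 1)) := by
  obtain ⟨s, hs⟩ : ∃ s, s = Real.sqrt (1 + P / N₀) := ⟨_, rfl⟩
  have hx : 0 < P / N₀ := by positivity
  have hs1 : 1 < s := by
    rw [hs]; exact Real.lt_sqrt_of_sq_lt (by linarith)
  have hs2 : s ^ 2 = 1 + P / N₀ := by rw [hs]; exact Real.sq_sqrt (by linarith)
  have hPs : P = N₀ * (s ^ 2 - 1) := by rw [hs2]; field_simp; ring
  have hs0 : 0 < s := by linarith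
  have hd : 0 < s - 1 := by linarith
  have hq : 0 < s ^ 2 - 1 := by nlinarith
  have hShare : PiShare = Real.log s := by
    rw [hPiShare, ← hs2, Real.log_pow]; push_cast; ring
  have h0 : Pi0 = Real.log ((1 + s ^ 2) / 2) := by
    rw [hPi0]; congr 1; rw [hs2]; field_simp; ring
  have hg : gstar = 1 / (s + 1) := by
    rw [hgstar, ← hs, hPs]
    have e : s ^ 2 - 1 = (s - 1) * (s + 1) := by ring
    rw [e]
    have := hd.ne'
    field_simp
    ring
  have hgt : PiShare < Pi0 := by
    rw [hShare, h0]
    exact Real.log_lt_log hs0 (by nlinarith [pow_pos hd 2])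
  refine ⟨hgt, fun g hg0 => ?_⟩
  have hD : 0 < Pi0 - PiShare := by linarith
  have hw : 0 < 2 + g * (s ^ 2 - 1) := by positivity
  obtain ⟨r, hr⟩ : ∃ r, r = 1 + (s ^ 2 - 1) / (2 + g * (s ^ 2 - 1)) := ⟨_, rfl⟩
  have hr0 : 0 < r := by rw [hr]; positivity
  have hspread : PiSpread g = Real.log r := by
    rw [hPiSpread, hr, hPs]; congr 2
    have e : N₀ + g * (N₀ * (s ^ 2 - 1)) / 2 = N₀ * (2 + g * (s ^ 2 - 1)) / 2 := by ring
    rw [e]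
    have := hw.ne'
    field_simp
  have A : lam g < 1 ↔ gstar < g := by
    have a1 : lam g < 1 ↔ PiSpread g < PiShare := by
      rw [hlam, sub_lt_comm, lt_div_iff₀ hD]
      constructor <;> intro h <;> linarith
    rw [a1, hspread, hShare, Real.log_lt_log_iff hr0 hs0, hg, div_lt_iff₀ (by linarith), hr,
      ← lt_sub_iff_add_lt', div_lt_iff₀ hw]
    have e : (s - 1) * (2 + g * (s ^ 2 - 1)) - (s ^ 2 - 1)
      = (s - 1) ^ 2 * (g * (s + 1) - 1) := by ring
    rw [← sub_pos, e, mul_pos_iff_of_pos_left (by positivity), sub_pos]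
  have B : 0 < lam g ↔ g < 1 := by
    have a1 : 0 < lam g ↔ 2 * PiShare < Pi0 + PiSpread g := by
      rw [hlam, sub_pos, div_lt_iff₀ hD]
      constructor <;> intro h <;> linarith
    have e1 : 2 * PiShare = Real.log (s ^ 2) := by rw [hShare, Real.log_pow]; push_cast; ring
    rw [a1, e1, h0, hspread, ← Real.log_mul (by positivity) hr0.ne',
      Real.log_lt_log_iff (by positivity) (by positivity), hr]
    have e : (1 + s ^ 2) / 2 * (1 + (s ^ 2 - 1) / (2 + g * (s ^ 2 - 1))) - s ^ 2
      = ((s ^ 2 - 1) ^ 2 / (2 * (2 + g * (s ^ 2 - 1)))) * (1 - g) := by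
      have := hw.ne'
      field_simp
      ring
    rw [← sub_pos, e, mul_pos_iff_of_pos_left (by positivity), sub_pos]
  rw [A, B, and_comm]
end

section
/- For all real P > 0, N₀ > 0 and α ∈ (0, 1], the function h(g) = α·log(1 + (P/2)/(N₀ + g·P/2)) + (1 − α)·S(g), where S(g) = (1/2)·log(1 + P/(2·N₀)) + (1/2)·log(1 + (P/2)/(N₀ + g·P)) for g ≤ 1/2 and S(g) = (1/2)·log(1 + P/N₀) for g > 1/2, is continuous on (0, ∞) and strictly decreasing on (0, ∞) (i.e., 0 < g < g' implies h(g) > h(g')). -/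
/-- The secondary user's expected rate upon entry, `h(g) = α·Π₂^spread(g) + (1 − α)·S(g)`,
is continuous and strictly decreasing on `(0, ∞)`. -/
theorem stmt_18 (P N₀ α : ℝ) (hP : 0 < P) (hN₀ : 0 < N₀) (hα : α ∈ Set.Ioc (0:ℝ) 1)
    (S h : ℝ → ℝ)
    (hS : ∀ g, S g = if g ≤ 1/2 then
        (1/2) * Real.log (1 + P / (2 * N₀)) + (1/2) * Real.log (1 + (P / 2) / (N₀ + g * P))
      else (1/2) * Real.log (1 + P / N₀))
    (hh : ∀ g, h g = α * Real.log (1 + (P / 2) / (N₀ + g * P / 2)) + (1 - α) * S g) :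
    ContinuousOn h (Set.Ioi 0) ∧ StrictAntiOn h (Set.Ioi 0) := by
  obtain ⟨ha0, ha1⟩ := hα
  have key : Real.log (1 + P / (2 * N₀)) + Real.log (1 + (P / 2) / (N₀ + (1/2) * P))
      = Real.log (1 + P / N₀) := by
    rw [← Real.log_mul (by positivity) (by positivity)]
    congr 1
    field_simp
    ring
  have hS' : ∀ g, S g = (1/2) * Real.log (1 + P / (2 * N₀))
      + (1/2) * Real.log (1 + (P / 2) / (N₀ + min g (1/2) * P)) := by
    intro g
    rw [hS]
    split_ifs with hg
    · rw [min_eq_left hg]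
    · rw [min_eq_right (le_of_lt (not_le.mp hg)), ← key]
      ring
  have hfun : h = fun g => α * Real.log (1 + (P / 2) / (N₀ + g * P / 2)) +
      (1 - α) * ((1/2) * Real.log (1 + P / (2 * N₀))
      + (1/2) * Real.log (1 + (P / 2) / (N₀ + min g (1/2) * P))) := by
    funext g
    rw [hh, hS']
  subst hfun
  constructor
  · intro g hg
    have hg0 : 0 < g := hg
    have hm : 0 < min g (1/2) := lt_min hg0 (by norm_num)
    have h1 : N₀ + g * P / 2 ≠ 0 := by positivity
    have h2 : N₀ + min g (1/2) * P ≠ 0 := by positivity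
    have h3 : 1 + (P / 2) / (N₀ + g * P / 2) ≠ 0 := by positivity
    have h4 : 1 + (P / 2) / (N₀ + min g (1/2) * P) ≠ 0 := by positivity
    apply ContinuousAt.continuousWithinAt
    have c1 : ContinuousAt (fun g : ℝ => Real.log (1 + (P / 2) / (N₀ + g * P / 2))) g :=
      ContinuousAt.log (continuousAt_const.add (continuousAt_const.div (by fun_prop) h1)) h3
    have c2 : ContinuousAt (fun g : ℝ => Real.log (1 + (P / 2) / (N₀ + min g (1/2) * P))) g :=
      ContinuousAt.log (continuousAt_const.add (continuousAt_const.div (by fun_prop) h2)) h4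
    exact (continuousAt_const.mul c1).add
      (continuousAt_const.mul (continuousAt_const.add (continuousAt_const.mul c2)))
  · intro a ha b hb hab
    have ha' : 0 < a := ha
    have hb' : 0 < b := hb
    have hma : 0 < min a (1/2) := lt_min ha' (by norm_num)
    have hmb : 0 < min b (1/2) := lt_min hb' (by norm_num)
    have hmm : min a (1/2) ≤ min b (1/2) := min_le_min_right _ hab.le
    have l1 : Real.log (1 + (P / 2) / (N₀ + b * P / 2))
        < Real.log (1 + (P / 2) / (N₀ + a * P / 2)) := by
      apply Real.log_lt_log (by positivity)
      gcongr
    have l2 : Real.log (1 + (P / 2) / (N₀ + min b (1/2) * P))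
        ≤ Real.log (1 + (P / 2) / (N₀ + min a (1/2) * P)) := by
      apply Real.log_le_log (by positivity)
      gcongr
    have m1 := mul_lt_mul_of_pos_left l1 ha0
    have m2 := mul_le_mul_of_nonneg_left l2 (sub_nonneg.mpr ha1)
    simp only
    linarith
end
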